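/- Let h be a symmetric bilinear form on V with associated symmetric endomorphism H and let 1 ≤ p ≤ n. Every p-form ω on V satisfies ⟨Ric_{h⧆g}(ω), ω⟩ = −(n−2p)·⟨Hω, ω⟩ + p·tr(h)·|ω|². -/

import Mathlib

/-!
The identity holds pointwise, before pairing with `ω`: `Ric_{h⧆g}(ω) = -(n - 2p) Hω + p tr(h) ω`.

Here `R(X,Y)Z = h(X,Z) Y - g(Y,Z) HX + g(X,Z) HY - h(Y,Z) X`. In `Ric_R(ω)`, letting `R(Xᵢ,eⱼ)` act
on the slot that holds `eⱼ` produces the trace `∑ⱼ R(X,eⱼ)eⱼ = -(n - 2) HX - tr(h) X`. When it acts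
on another slot, freezing the remaining arguments turns `ω` into an alternating bilinear form `B`,
and `∑ⱼ B(eⱼ, R(x,eⱼ)y) = B(Hx, y) + B(x, Hy)`: the terms with `B(eⱼ, eⱼ)` and `∑ⱼ B(eⱼ, Heⱼ)`
vanish, the latter because `H` is symmetric. Summing over ordered pairs of distinct slots gives
`2(p - 1) ∑ᵢ ω(…, HXᵢ, …)`, whence the coefficient `(n - 2) - 2(p - 1) = n - 2p`.
-/

open scoped RealInnerProductSpace BigOperators
open Finset

noncomputable section

variable {V : Type*} [NormedAddCommGroup V] [InnerProductSpace ℝ V]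

/-- The action `(L T)(X₁,…,X_k) = −Σᵢ T(X₁,…,L(Xᵢ),…,X_k)` of a map `L : V → V`
on a `(0,k)`-tensor `T`. -/
def tact {k : ℕ} (L : V → V) (T : (Fin k → V) → ℝ) (X : Fin k → V) : ℝ :=
  -∑ i, T (Function.update X i (L (X i)))

/-- The Kulkarni–Nomizu product of two bilinear forms. -/
def knProd (s₁ s₂ : V → V → ℝ) (X Y Z W : V) : ℝ :=
  s₁ X Z * s₂ Y W - s₁ X W * s₂ Y Z + s₁ Y W * s₂ X Z - s₁ Y Z * s₂ X W

/-- The inner product `g` as a bilinear form. -/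
def gf (X Y : V) : ℝ := ⟪X, Y⟫

/-- The curvature endomorphism `R(X,Y)`, determined by `g(R(X,Y)Z,W) = R(X,Y,Z,W)`,
expressed via the orthonormal basis `e`. -/
def curvOp {n : ℕ} (e : Fin n → V) (R : V → V → V → V → ℝ) (X Y Z : V) : V :=
  ∑ a, R X Y Z (e a) • e a

/-- The curvature term `Ric_R(T)(X₁,…,X_k) = Σᵢ Σⱼ ((R(Xᵢ,eⱼ))T)(X₁,…,eⱼ,…,X_k)`. -/
def ricTerm {n k : ℕ} (e : Fin n → V) (R : V → V → V → V → ℝ)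
    (T : (Fin k → V) → ℝ) (X : Fin k → V) : ℝ :=
  ∑ i : Fin k, ∑ j : Fin n, tact (curvOp e R (X i) (e j)) T (Function.update X i (e j))

/-- The inner product of two `(0,k)`-tensors with respect to the orthonormal basis `e`. -/
def tinner {n k : ℕ} (e : Fin n → V) (S T : (Fin k → V) → ℝ) : ℝ :=
  ∑ I : Fin k → Fin n, S (fun m => e (I m)) * T (fun m => e (I m))

/-- The skew endomorphism `(A ∧ B)Z = g(A,Z)B − g(B,Z)A`. -/
def wedgeOp (A B Z : V) : V := ⟪A, Z⟫ • B - ⟪B, Z⟫ • A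

section Frame

lemma sum_inner_smul_map {𝕜 E F ι : Type*} [RCLike 𝕜] [NormedAddCommGroup E]
    [InnerProductSpace 𝕜 E] [AddCommMonoid F] [Module 𝕜 F] [Fintype ι]
    (e : OrthonormalBasis ι 𝕜 E) (f : E →ₗ[𝕜] F) (v : E) :
    ∑ j, inner 𝕜 (e j) v • f (e j) = f v := by
  conv_rhs => rw [← e.sum_repr' v]
  simp only [map_sum, map_smul]

variable {ι F : Type*} [Fintype ι] [AddCommGroup F] [Module ℝ F] (e : OrthonormalBasis ι ℝ V)

lemma sum_bilin_apply_map_eq_sum_bilin_map_apply {T : V →ₗ[ℝ] V} (hT : T.IsSymmetric)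
    (B : V →ₗ[ℝ] V →ₗ[ℝ] F) : ∑ j, B (e j) (T (e j)) = ∑ j, B (T (e j)) (e j) := by
  calc ∑ j, B (e j) (T (e j))
      = ∑ j, ∑ k, ⟪e k, T (e j)⟫ • B (e j) (e k) := by simp only [sum_inner_smul_map]
    _ = ∑ k, ∑ j, ⟪e j, T (e k)⟫ • B (e j) (e k) := by
        rw [sum_comm]
        refine sum_congr rfl fun k _ => sum_congr rfl fun j _ => ?_
        rw [← hT, real_inner_comm]
    _ = ∑ k, B (T (e k)) (e k) :=
        sum_congr rfl fun k _ => sum_inner_smul_map e (B.flip (e k)) (T (e k))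

lemma sum_isAlt_apply_map_eq_zero {T : V →ₗ[ℝ] V} (hT : T.IsSymmetric)
    {B : V →ₗ[ℝ] V →ₗ[ℝ] F} (hB : B.IsAlt) : ∑ j, B (e j) (T (e j)) = 0 := by
  have : IsAddTorsionFree F := .of_isTorsionFree ℝ F
  refine self_eq_neg.mp ?_
  conv_lhs => rw [sum_bilin_apply_map_eq_sum_bilin_map_apply e hT]
  simp only [← sum_neg_distrib, hB.neg]

end Frame

section TwoSlots

variable {R M N ι : Type*} [CommSemiring R] [AddCommMonoid M] [Module R M] [AddCommMonoid N]
  [Module R N] [DecidableEq ι]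

/-- The bilinear map obtained from an alternating map `ω` by letting only the arguments in the
distinct slots `i` and `k` vary; the arguments in the remaining slots are read off `X`. -/
def twoSlotBilin (ω : M [⋀^ι]→ₗ[R] N) (X : ι → M) {i k : ι} (hik : i ≠ k) : M →ₗ[R] M →ₗ[R] N :=
  LinearMap.mk₂ R (fun a b => ω (Function.update (Function.update X i a) k b))
    (fun a a' b => by simp only [Function.update_comm hik, AlternatingMap.map_update_add])
    (fun c a b => by simp only [Function.update_comm hik, AlternatingMap.map_update_smul])
    (fun a b b' => AlternatingMap.map_update_add ..)
    (fun c a b => AlternatingMap.map_update_smul ..)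

lemma twoSlotBilin_apply (ω : M [⋀^ι]→ₗ[R] N) (X : ι → M) {i k : ι} (hik : i ≠ k) (a b : M) :
    twoSlotBilin ω X hik a b = ω (Function.update (Function.update X i a) k b) := rfl

lemma isAlt_twoSlotBilin (ω : M [⋀^ι]→ₗ[R] N) (X : ι → M) {i k : ι} (hik : i ≠ k) :
    (twoSlotBilin ω X hik).IsAlt := fun a =>
  ω.map_eq_zero_of_eq _ (by simp [hik]) hik

end TwoSlots

lemma sum_sum_erase_add {ι R : Type*} [Fintype ι] [DecidableEq ι] [CommRing R] (f : ι → R) :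
    ∑ i, ∑ k ∈ univ.erase i, (f i + f k) = 2 * ((Fintype.card ι : R) - 1) * ∑ i, f i := by
  simp only [sum_erase_eq_sub (mem_univ _), sum_add_distrib,
    sum_sub_distrib, sum_const, card_univ, nsmul_eq_mul, ← mul_sum]
  ring

section Tensors

variable {n k : ℕ}

lemma tinner_add_left {E : Type*} (e : Fin n → E) (S S' T : (Fin k → E) → ℝ) :
    tinner e (S + S') T = tinner e S T + tinner e S' T := by
  simp only [tinner, Pi.add_apply, add_mul, sum_add_distrib]

lemma tinner_smul_left {E : Type*} (e : Fin n → E) (c : ℝ) (S T : (Fin k → E) → ℝ) :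
    tinner e (c • S) T = c * tinner e S T := by
  simp only [tinner, Pi.smul_apply, smul_eq_mul, mul_assoc, mul_sum]

lemma ricTerm_multilinearMap (e : Fin n → V) (R : V → V → V → V → ℝ)
    (T : MultilinearMap ℝ (fun _ : Fin k => V) ℝ) (X : Fin k → V) :
    ricTerm e R T X =
      -∑ i, T (Function.update X i (∑ j, curvOp e R (X i) (e j) (e j)))
      - ∑ i, ∑ l ∈ univ.erase i, ∑ j,
          T (Function.update (Function.update X i (e j)) l
            (curvOp e R (X i) (e j) (X l))) := by
  have slot (i : Fin k) :
      ∑ j, tact (curvOp e R (X i) (e j)) T (Function.update X i (e j)) =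
        -T (Function.update X i (∑ j, curvOp e R (X i) (e j) (e j)))
        - ∑ l ∈ univ.erase i, ∑ j,
            T (Function.update (Function.update X i (e j)) l
              (curvOp e R (X i) (e j) (X l))) := by
    simp only [tact]
    rw [sum_neg_distrib, sum_comm, ← add_sum_erase _ _ (mem_univ i), neg_add']
    congr 1
    · simp only [Function.update_idem, Function.update_self, T.map_update_sum]
    · exact sum_congr rfl fun l hl => by simp only [Function.update_of_ne (ne_of_mem_erase hl)]
  simp only [ricTerm, slot, sum_sub_distrib, sum_neg_distrib]

end Tensors

/-- The bilinear form `g(S·, ·)` associated with a map `S : V → V`; for a symmetric endomorphism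
this is the correspondence between `H` and `h`. -/
def endoForm (S : V → V) (X Y : V) : ℝ := ⟪S X, Y⟫

section Curvature

variable {n : ℕ} (e : OrthonormalBasis (Fin n) ℝ V)

lemma curvOp_eq_of_forall_eq_inner {R : V → V → V → V → ℝ} {X Y Z A : V}
    (hA : ∀ W, R X Y Z W = ⟪A, W⟫) : curvOp e R X Y Z = A := by
  simp only [curvOp, hA, real_inner_comm _ A, e.sum_repr']

lemma curvOp_knProd (S₁ S₂ : V → V) (X Y Z : V) :
    curvOp e (knProd (endoForm S₁) (endoForm S₂)) X Y Z =
      ⟪S₁ X, Z⟫ • S₂ Y - ⟪S₂ Y, Z⟫ • S₁ X + ⟪S₂ X, Z⟫ • S₁ Y - ⟪S₁ Y, Z⟫ • S₂ X := by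
  refine curvOp_eq_of_forall_eq_inner e fun W => ?_
  simp only [knProd, endoForm, inner_sub_left, inner_add_left, real_inner_smul_left]
  ring

lemma curvOp_knProd_gf (S : V → V) (X Y Z : V) :
    curvOp e (knProd (endoForm S) gf) X Y Z =
      ⟪S X, Z⟫ • Y - ⟪Y, Z⟫ • S X + ⟪X, Z⟫ • S Y - ⟪S Y, Z⟫ • X :=
  curvOp_knProd e S id X Y Z

variable (H : V →ₗ[ℝ] V)

lemma sum_curvOp_knProd_gf_self (X : V) :
    ∑ j, curvOp e (knProd (endoForm H) gf) X (e j) (e j) =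
      -((n : ℝ) - 2) • H X - (∑ a, endoForm H (e a) (e a)) • X := by
  have sum_smul_frame : ∑ j, ⟪H X, e j⟫ • e j = H X := by
    simp only [real_inner_comm _ (H X), e.sum_repr']
  have sum_smul_image : ∑ j, ⟪X, e j⟫ • H (e j) = H X := by
    simp only [real_inner_comm _ X, sum_inner_smul_map]
  have sum_inner_self : ∑ j, ⟪e j, e j⟫ = (n : ℝ) := by
    simp
  simp only [curvOp_knProd_gf, sum_sub_distrib, sum_add_distrib, ← sum_smul,
    sum_smul_frame, sum_smul_image, sum_inner_self, endoForm]
  module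

variable {H}

lemma sum_isAlt_curvOp_knProd_gf {F : Type*} [AddCommGroup F] [Module ℝ F] (hH : H.IsSymmetric)
    {B : V →ₗ[ℝ] V →ₗ[ℝ] F} (hB : B.IsAlt) (x y : V) :
    ∑ j, B (e j) (curvOp e (knProd (endoForm H) gf) x (e j) y) = B (H x) y + B x (H y) := by
  have contract_left (v w : V) : ∑ j, ⟪e j, v⟫ • B (e j) w = B v w :=
    sum_inner_smul_map e (B.flip w) v
  simp only [curvOp_knProd_gf, map_sub, map_add, map_smul, hB.self_eq_zero, smul_zero,
    sum_sub_distrib, sum_add_distrib, ← smul_sum,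
    sum_isAlt_apply_map_eq_zero e hH hB, hH (e _) y, contract_left, sum_const_zero,
    ← hB.neg y, ← hB.neg (H y)]
  abel

variable {p : ℕ} (ω : V [⋀^Fin p]→ₗ[ℝ] ℝ)

lemma map_update_sum_curvOp_knProd_gf_self (X : Fin p → V) (i : Fin p) :
    ω (Function.update X i (∑ j, curvOp e (knProd (endoForm H) gf) (X i) (e j) (e j))) =
      -((n : ℝ) - 2) * ω (Function.update X i (H (X i)))
      - (∑ a, endoForm H (e a) (e a)) * ω X := by
  rw [sum_curvOp_knProd_gf_self, ω.map_update_sub, ω.map_update_smul, ω.map_update_smul,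
    Function.update_eq_self, smul_eq_mul, smul_eq_mul]

lemma sum_map_update_update_curvOp_knProd_gf (hH : H.IsSymmetric) (X : Fin p → V) {i k : Fin p}
    (hik : i ≠ k) :
    ∑ j, ω (Function.update (Function.update X i (e j)) k
        (curvOp e (knProd (endoForm H) gf) (X i) (e j) (X k))) =
      ω (Function.update X i (H (X i))) + ω (Function.update X k (H (X k))) := by
  have update_left : Function.update (Function.update X i (H (X i))) k (X k) =
      Function.update X i (H (X i)) := by
    rw [Function.update_comm hik, Function.update_eq_self]
  simpa only [twoSlotBilin_apply, Function.update_eq_self, update_left]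
    using sum_isAlt_curvOp_knProd_gf e hH (isAlt_twoSlotBilin ω X hik) (X i) (X k)

theorem ricTerm_knProd_gf (hH : H.IsSymmetric) :
    ricTerm e (knProd (endoForm H) gf) ω =
      (-((n : ℝ) - 2 * p)) • tact H ω + ((p : ℝ) * ∑ a, endoForm H (e a) (e a)) • ⇑ω := by
  funext X
  have off_diagonal :
      ∑ i, ∑ k ∈ univ.erase i, ∑ j, ω (Function.update (Function.update X i (e j)) k
          (curvOp e (knProd (endoForm H) gf) (X i) (e j) (X k))) =
        2 * ((p : ℝ) - 1) * ∑ i, ω (Function.update X i (H (X i))) := by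
    rw [sum_congr rfl fun i _ => sum_congr rfl fun k hk =>
      sum_map_update_update_curvOp_knProd_gf e ω hH X (ne_of_mem_erase hk).symm,
      sum_sum_erase_add fun i => ω (Function.update X i (H (X i))), Fintype.card_fin]
  rw [← ω.coe_multilinearMap, ricTerm_multilinearMap]
  simp only [AlternatingMap.coe_multilinearMap, off_diagonal,
    map_update_sum_curvOp_knProd_gf_self, sum_sub_distrib, ← mul_sum,
    sum_const, card_univ, Fintype.card_fin, nsmul_eq_mul, Pi.add_apply,
    Pi.smul_apply, smul_eq_mul, tact]
  ring

end Curvature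

/-- Proposition 3.3(2), second identity. -/
theorem stmt7 {n p : ℕ} (hp : 1 ≤ p) (hpn : p ≤ n) (e : OrthonormalBasis (Fin n) ℝ V)
    (H : V →ₗ[ℝ] V) (hHsym : ∀ X Y : V, ⟪H X, Y⟫ = ⟪X, H Y⟫)
    (h : V → V → ℝ) (hh : ∀ X Y : V, h X Y = ⟪H X, Y⟫)
    (ω : AlternatingMap ℝ V ℝ (Fin p)) :
    tinner ⇑e (ricTerm ⇑e (knProd h gf) ⇑ω) ⇑ω =
      -((n : ℝ) - 2 * p) * tinner ⇑e (tact ⇑H ⇑ω) ⇑ω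
      + (p : ℝ) * (∑ a : Fin n, h (e a) (e a)) * tinner ⇑e ⇑ω ⇑ω := by
  obtain rfl : h = endoForm H := funext₂ hh
  rw [ricTerm_knProd_gf e ω hHsym, tinner_add_left, tinner_smul_left, tinner_smul_left]
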